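/- Under Assumption 1, fix i ∈ [m] and j ∈ {2,…,n}, and let 𝒫_j = { X_{l,τ} : l ∈ [m], 1 ≤ τ ≤ j−1 } be the set of all variables strictly before time j. Among all subsets S ⊆ 𝒫_j such that X_{i,j} is conditionally independent of the tuple of variables 𝒫_j ∖ S given the tuple of variables in S, there is a unique one of minimum cardinality, and this minimal subset is contained in { X_{l,τ} : l ∈ A(i) ∪ {i}, 1 ≤ τ ≤ j−1 }, where A(i) is the causal Markov boundary of X_i. (This is the content of the claim that fully reducing each term of the minimal generative model factorization yields the unique Bayesian network of variable dependencies consistent with the causal time ordering.) -/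

import Mathlib

open Finset

/-- Probability of an event under the probability mass function `p` on a finite space. -/
noncomputable def pr {Ω : Type} [Fintype Ω] (p : Ω → ℝ) (E : Set Ω) : ℝ :=
  ∑ ω : Ω, E.indicator p ω

/-- Shannon conditional mutual information `I(A ; B | C)` of finite-valued random variables
on a finite probability space with pmf `p` (terms with vanishing probability contribute `0`,
by the conventions `Real.log 0 = 0`, `x / 0 = 0`). -/
noncomputable def cmi {Ω α β γ : Type} [Fintype Ω] [Fintype α] [Fintype β] [Fintype γ]
    (p : Ω → ℝ) (A : Ω → α) (B : Ω → β) (C : Ω → γ) : ℝ :=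
  ∑ a : α, ∑ b : β, ∑ c : γ,
    pr p {ω | A ω = a ∧ B ω = b ∧ C ω = c} *
      Real.log (pr p {ω | A ω = a ∧ B ω = b ∧ C ω = c} * pr p {ω | C ω = c} /
        (pr p {ω | A ω = a ∧ C ω = c} * pr p {ω | B ω = b ∧ C ω = c}))

/-- `A` and `B` are conditionally independent given `C` (under the pmf `p`). -/
def CondIndep {Ω α β γ : Type} [Fintype Ω] (p : Ω → ℝ)
    (A : Ω → α) (B : Ω → β) (C : Ω → γ) : Prop :=
  ∀ (a : α) (b : β) (c : γ),
    pr p {ω | A ω = a ∧ B ω = b ∧ C ω = c} * pr p {ω | C ω = c}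
      = pr p {ω | A ω = a ∧ C ω = c} * pr p {ω | B ω = b ∧ C ω = c}

/-- Trajectories of `m` processes over `n` time steps with alphabet `𝒳`:
`ω i j` is the value of process `i` at (0-indexed) time `j`. -/
abbrev Traj (m n : ℕ) (𝒳 : Type) := Fin m → Fin n → 𝒳

/-- The past `X_S^{j-1}`: the values of the processes in `S` at times strictly before `j`;
all other entries are masked by `none`. -/
def past {m n : ℕ} {𝒳 : Type} (S : Finset (Fin m)) (j : Fin n) (ω : Traj m n 𝒳) :
    Fin m → Fin n → Option 𝒳 :=
  fun k t => if k ∈ S ∧ t < j then some (ω k t) else none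

/-- Causally conditioned directed information
`I(X_S → X_i ‖ X_T) := Σ_{j=1}^{n} I(X_S^{j-1} ; X_{i,j} | X_i^{j-1}, X_T^{j-1})`. -/
noncomputable def di {m n : ℕ} {𝒳 : Type} [Fintype 𝒳] [DecidableEq 𝒳]
    (p : Traj m n 𝒳 → ℝ) (S : Finset (Fin m)) (i : Fin m) (T : Finset (Fin m)) : ℝ :=
  ∑ j : Fin n,
    cmi p (past S j) (fun ω => ω i j) (fun ω => (past {i} j ω, past T j ω))

/-- Assumption 1: the joint distribution is strictly positive (and is a pmf), and at each
time `j` the variables `X_{1,j}, …, X_{m,j}` are mutually conditionally independent given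
the full past `X_{[m]}^{j-1}` (stated in the division-free form
`P(joint ∧ past) · P(past)^{m-1} = Π_i P(X_{i,j} = x_i ∧ past)`). -/
def Assumption1 {m n : ℕ} {𝒳 : Type} [Fintype 𝒳] [DecidableEq 𝒳]
    (p : Traj m n 𝒳 → ℝ) : Prop :=
  (∀ ω, 0 < p ω) ∧ (∑ ω : Traj m n 𝒳, p ω = 1) ∧
    ∀ (j : Fin n) (x : Fin m → 𝒳) (h : Fin m → Fin n → Option 𝒳),
      pr p {ω | (∀ i, ω i j = x i) ∧ past Finset.univ j ω = h} *
          pr p {ω | past Finset.univ j ω = h} ^ (m - 1)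
        = ∏ i : Fin m, pr p {ω | ω i j = x i ∧ past Finset.univ j ω = h}

/-- `S ⊆ [m]∖{i}` is a causal Markov blanket of `X_i` if
`I(X_{[m]∖({i}∪S)} → X_i ‖ X_S) = 0`. -/
def IsCausalBlanket {m n : ℕ} {𝒳 : Type} [Fintype 𝒳] [DecidableEq 𝒳]
    (p : Traj m n 𝒳 → ℝ) (i : Fin m) (S : Finset (Fin m)) : Prop :=
  S ⊆ Finset.univ.erase i ∧ di p (Finset.univ.erase i \ S) i S = 0

/-- A causal Markov boundary `A(i)` of `X_i` is a causal Markov blanket of minimum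
cardinality. -/
def IsCausalBoundary {m n : ℕ} {𝒳 : Type} [Fintype 𝒳] [DecidableEq 𝒳]
    (p : Traj m n 𝒳 → ℝ) (i : Fin m) (A : Finset (Fin m)) : Prop :=
  IsCausalBlanket p i A ∧
    ∀ B : Finset (Fin m), IsCausalBlanket p i B → A.card ≤ B.card

/-- The tuple of the variables `X_{k,t}` with `(k,t) ∈ S` (all other entries masked). -/
def varTuple {m n : ℕ} {𝒳 : Type} (S : Finset (Fin m × Fin n)) (ω : Traj m n 𝒳) :
    Fin m → Fin n → Option 𝒳 :=
  fun k t => if (k, t) ∈ S then some (ω k t) else none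

/-- `S` is a set of variables strictly before time `j` such that `X_{i,j}` is conditionally
independent of the remaining variables before time `j` given the tuple of variables in `S`. -/
def GoodSet {m n : ℕ} {𝒳 : Type} [Fintype 𝒳] [DecidableEq 𝒳]
    (p : Traj m n 𝒳 → ℝ) (i : Fin m) (j : Fin n) (S : Finset (Fin m × Fin n)) : Prop :=
  (∀ q ∈ S, q.2 < j) ∧
    cmi p
      (varTuple ((Finset.univ.filter fun q : Fin m × Fin n => q.2 < j) \ S))
      (fun ω => ω i j) (varTuple S) = 0

/-!
Since the joint law is strictly positive, `X_{i,j}` is conditionally independent of the rest of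
the past given the variables in `S` exactly when its law conditional on the full past is a function
of the variables in `S`. Positivity also gives every trajectory positive mass, so the values in `S`
of one trajectory can be spliced with the values outside `S` of another: a function of the
trajectory which depends only on the variables in `S`, and only on those in `T`, depends only on
those in `S ∩ T`. Hence the sets which screen `X_{i,j}` off from the rest of the past are closed
under intersection, so there is a least one; it is the only one of minimum cardinality, and it is
contained in the one given by a causal Markov blanket.
-/

open InformationTheory

section LeastSet

theorem exists_isLeast_of_infClosed {α : Type*} [SemilatticeInf α] {s : Set α} (hs : InfClosed s)
    (hfin : s.Finite) (hne : s.Nonempty) : ∃ a, IsLeast s a := by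
  obtain ⟨a, ha⟩ := hfin.exists_minimal hne
  exact ⟨a, hs.codirectedOn.minimal_iff_isLeast.1 ha⟩

theorem mem_and_card_minimal_iff_eq_of_isLeast {α : Type*} {F : Set (Finset α)}
    {S T : Finset α} (hS : IsLeast F S) : (T ∈ F ∧ ∀ T' ∈ F, #T ≤ #T') ↔ T = S := by
  constructor
  · rintro ⟨hT, hmin⟩
    exact (eq_of_subset_of_card_le (hS.2 hT) (hmin S hS.1)).symm
  · rintro rfl
    exact ⟨hS.1, fun T' hT' => card_le_card (hS.2 hT')⟩

end LeastSet

section KlFun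

theorem mul_klFun_div {x y : ℝ} (h : y = 0 → x = 0) :
    y * klFun (x / y) = x * Real.log (x / y) - (x - y) := by
  rcases eq_or_ne y 0 with rfl | hy
  · simp [h rfl]
  · rw [klFun_apply]
    field_simp
    ring

theorem mul_klFun_div_nonneg {x y : ℝ} (hx : 0 ≤ x) (hy : 0 ≤ y) : 0 ≤ y * klFun (x / y) :=
  mul_nonneg hy (klFun_nonneg (div_nonneg hx hy))

theorem mul_klFun_div_eq_zero_iff {x y : ℝ} (hx : 0 ≤ x) (hy : 0 ≤ y) (h : y = 0 → x = 0) :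
    y * klFun (x / y) = 0 ↔ x = y := by
  rcases eq_or_ne y 0 with rfl | hy'
  · simp [h rfl]
  · rw [mul_eq_zero, or_iff_right hy', klFun_eq_zero_iff (div_nonneg hx hy), div_eq_one_iff_eq hy']

end KlFun

section Pr

variable {Ω α : Type} [Fintype Ω] {p : Ω → ℝ}

theorem pr_nonneg (hp : ∀ ω, 0 ≤ p ω) (E : Set Ω) : 0 ≤ pr p E :=
  sum_nonneg fun ω _ => Set.indicator_nonneg (fun ω _ => hp ω) ω

theorem pr_fiber_pos (hp : ∀ ω, 0 < p ω) (A : Ω → α) (ω : Ω) : 0 < pr p {ω' | A ω' = A ω} := by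
  refine sum_pos' (fun ω _ => Set.indicator_nonneg (fun ω _ => (hp ω).le) ω) ⟨ω, mem_univ ω, ?_⟩
  simpa using hp ω

theorem pr_mono (hp : ∀ ω, 0 ≤ p ω) {E F : Set Ω} (h : E ⊆ F) : pr p E ≤ pr p F :=
  sum_le_sum fun ω _ => Set.indicator_le_indicator_of_subset h hp ω

theorem pr_eq_zero_of_subset (hp : ∀ ω, 0 ≤ p ω) {E F : Set Ω} (hF : pr p F = 0) (h : E ⊆ F) :
    pr p E = 0 :=
  le_antisymm ((pr_mono hp h).trans hF.le) (pr_nonneg hp E)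

theorem pr_eq_zero_of_forall_notMem {E : Set Ω} (h : ∀ ω, ω ∉ E) : pr p E = 0 :=
  sum_eq_zero fun ω _ => Set.indicator_of_notMem (h ω) p

theorem sum_pr_eq_and [Fintype α] (A : Ω → α) (Q : Ω → Prop) :
    ∑ a, pr p {ω | A ω = a ∧ Q ω} = pr p {ω | Q ω} := by
  classical
  unfold pr
  rw [sum_comm]
  refine sum_congr rfl fun ω _ => ?_
  by_cases hQ : Q ω <;> simp [Set.indicator_apply, hQ]

end Pr

section ConditionalIndependence

variable {Ω α β γ : Type} [Fintype Ω] {p : Ω → ℝ}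

/-- The joint mass `(A, B, C)` would have at `(a, b, c)` if `A` and `B` were conditionally
independent given `C`, with the laws of `(A, C)` and `(B, C)` unchanged; it is `0` where `C = c`
has mass `0`. -/
noncomputable def condProd (p : Ω → ℝ) (A : Ω → α) (B : Ω → β) (C : Ω → γ)
    (a : α) (b : β) (c : γ) : ℝ :=
  pr p {ω | A ω = a ∧ C ω = c} * pr p {ω | B ω = b ∧ C ω = c} / pr p {ω | C ω = c}

theorem condProd_nonneg (hp : ∀ ω, 0 ≤ p ω) (A : Ω → α) (B : Ω → β) (C : Ω → γ)
    (a : α) (b : β) (c : γ) : 0 ≤ condProd p A B C a b c :=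
  div_nonneg (mul_nonneg (pr_nonneg hp _) (pr_nonneg hp _)) (pr_nonneg hp _)

theorem pr_eq_zero_of_condProd_eq_zero (hp : ∀ ω, 0 ≤ p ω) {A : Ω → α} {B : Ω → β} {C : Ω → γ}
    {a : α} {b : β} {c : γ} (h : condProd p A B C a b c = 0) :
    pr p {ω | A ω = a ∧ B ω = b ∧ C ω = c} = 0 := by
  rcases div_eq_zero_iff.1 h with h | h
  · rcases mul_eq_zero.1 h with h | h
    · exact pr_eq_zero_of_subset hp h fun _ hω => ⟨hω.1, hω.2.2⟩
    · exact pr_eq_zero_of_subset hp h fun _ hω => hω.2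
  · exact pr_eq_zero_of_subset hp h fun _ hω => hω.2.2

theorem condIndep_iff_eq_condProd (hp : ∀ ω, 0 ≤ p ω) {A : Ω → α} {B : Ω → β} {C : Ω → γ} :
    CondIndep p A B C ↔
      ∀ a b c, pr p {ω | A ω = a ∧ B ω = b ∧ C ω = c} = condProd p A B C a b c := by
  refine forall_congr' fun a => forall_congr' fun b => forall_congr' fun c => ?_
  rcases eq_or_ne (pr p {ω | C ω = c}) 0 with hc | hc
  · have hac : pr p {ω | A ω = a ∧ C ω = c} = 0 :=
      pr_eq_zero_of_subset hp hc fun _ hω => hω.2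
    have habc : pr p {ω | A ω = a ∧ B ω = b ∧ C ω = c} = 0 :=
      pr_eq_zero_of_subset hp hc fun _ hω => hω.2.2
    simp [condProd, hc, hac, habc]
  · rw [condProd, eq_div_iff hc]

theorem sum_condProd [Fintype β] (hp : ∀ ω, 0 ≤ p ω) (A : Ω → α) (B : Ω → β) (C : Ω → γ)
    (a : α) (c : γ) : ∑ b, condProd p A B C a b c = pr p {ω | A ω = a ∧ C ω = c} := by
  simp only [condProd]
  rw [← sum_div, ← mul_sum, sum_pr_eq_and B]
  exact mul_div_cancel_of_imp fun hc => pr_eq_zero_of_subset hp hc fun _ hω => hω.2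

section MutualInformation

variable [Fintype α] [Fintype β] [Fintype γ]

theorem cmi_eq_sum_klFun (hp : ∀ ω, 0 ≤ p ω) (A : Ω → α) (B : Ω → β) (C : Ω → γ) :
    cmi p A B C = ∑ x : α × β × γ, condProd p A B C x.1 x.2.1 x.2.2 *
      klFun (pr p {ω | A ω = x.1 ∧ B ω = x.2.1 ∧ C ω = x.2.2} /
        condProd p A B C x.1 x.2.1 x.2.2) := by
  have same_mass : ∑ a, ∑ b, ∑ c, pr p {ω | A ω = a ∧ B ω = b ∧ C ω = c} =
      ∑ a, ∑ b, ∑ c, condProd p A B C a b c := by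
    refine sum_congr rfl fun a _ => ?_
    rw [sum_comm, sum_comm (f := fun b c => condProd p A B C a b c)]
    refine sum_congr rfl fun c _ => ?_
    rw [sum_condProd hp, ← sum_pr_eq_and B]
    simp only [and_left_comm]
  simp only [mul_klFun_div (pr_eq_zero_of_condProd_eq_zero hp), Fintype.sum_prod_type,
    sum_sub_distrib, same_mass, sub_self, sub_zero]
  simp only [cmi, condProd, div_div_eq_mul_div]

theorem cmi_nonneg (hp : ∀ ω, 0 ≤ p ω) (A : Ω → α) (B : Ω → β) (C : Ω → γ) :
    0 ≤ cmi p A B C := by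
  rw [cmi_eq_sum_klFun hp]
  exact sum_nonneg fun x _ => mul_klFun_div_nonneg (pr_nonneg hp _) (condProd_nonneg hp ..)

theorem cmi_eq_zero_iff_condIndep (hp : ∀ ω, 0 ≤ p ω) {A : Ω → α} {B : Ω → β} {C : Ω → γ} :
    cmi p A B C = 0 ↔ CondIndep p A B C := by
  rw [cmi_eq_sum_klFun hp, condIndep_iff_eq_condProd hp, sum_eq_zero_iff_of_nonneg fun x _ =>
    mul_klFun_div_nonneg (pr_nonneg hp _) (condProd_nonneg hp ..)]
  simp only [mul_klFun_div_eq_zero_iff (pr_nonneg hp _) (condProd_nonneg hp ..)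
    (pr_eq_zero_of_condProd_eq_zero hp), mem_univ, true_implies, Prod.forall]

end MutualInformation

/-- The conditional law of `B` given `C`: the mass function of `B` on the event that `C` takes the
value it has at `ω`. -/
noncomputable def condLaw (p : Ω → ℝ) (B : Ω → β) (C : Ω → γ) (ω : Ω) (b : β) : ℝ :=
  pr p {ω' | B ω' = b ∧ C ω' = C ω} / pr p {ω' | C ω' = C ω}

theorem condLaw_congr {C : Ω → γ} {D : Ω → α} (h : ∀ ω ω', C ω = C ω' ↔ D ω = D ω') (B : Ω → β) :
    condLaw p B C = condLaw p B D := by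
  ext ω b
  simp only [condLaw, h]

theorem condLaw_factorsThrough (B : Ω → β) (C : Ω → γ) : (condLaw p B C).FactorsThrough C := by
  intro ω ω' h
  ext b
  rw [condLaw, condLaw, h]

theorem condLaw_mul_pr (hp : ∀ ω, 0 < p ω) (B : Ω → β) (C : Ω → γ) (ω : Ω) (b : β) :
    condLaw p B C ω b * pr p {ω' | C ω' = C ω} = pr p {ω' | B ω' = b ∧ C ω' = C ω} :=
  div_mul_cancel₀ _ (pr_fiber_pos hp C ω).ne'

theorem condLaw_eq_iff_condIndep (hp : ∀ ω, 0 < p ω) {A : Ω → α} {B : Ω → β} {C : Ω → γ} :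
    condLaw p B (fun ω => (A ω, C ω)) = condLaw p B C ↔ CondIndep p A B C := by
  have condLaw_eq_iff (ω : Ω) (b : β) :
      condLaw p B (fun ω => (A ω, C ω)) ω b = condLaw p B C ω b ↔
        pr p {ω' | A ω' = A ω ∧ B ω' = b ∧ C ω' = C ω} * pr p {ω' | C ω' = C ω} =
          pr p {ω' | A ω' = A ω ∧ C ω' = C ω} * pr p {ω' | B ω' = b ∧ C ω' = C ω} := by
    have pr_ac_pos := pr_fiber_pos hp (fun ω => (A ω, C ω)) ω
    simp only [Prod.mk.injEq] at pr_ac_pos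
    simp only [condLaw, Prod.mk.injEq, and_left_comm (a := B _ = b)]
    rw [div_eq_div_iff pr_ac_pos.ne' (pr_fiber_pos hp C ω).ne',
      mul_comm (pr p {ω' | B ω' = b ∧ C ω' = C ω})]
  simp only [funext_iff, condLaw_eq_iff]
  refine ⟨fun h a b c => ?_, fun h ω b => h _ b _⟩
  by_cases hac : ∃ ω, A ω = a ∧ C ω = c
  · obtain ⟨ω, rfl, rfl⟩ := hac
    exact h ω b
  · have pr_ac : pr p {ω | A ω = a ∧ C ω = c} = 0 :=
      pr_eq_zero_of_forall_notMem fun ω hω => hac ⟨ω, hω⟩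
    have pr_abc : pr p {ω | A ω = a ∧ B ω = b ∧ C ω = c} = 0 :=
      pr_eq_zero_of_forall_notMem fun ω hω => hac ⟨ω, hω.1, hω.2.2⟩
    rw [pr_ac, pr_abc, zero_mul, zero_mul]

-- Averaging over the values of `A` leaves a conditional law which does not depend on `A` unchanged.
theorem condLaw_eq_of_factorsThrough [Finite α] (hp : ∀ ω, 0 < p ω)
    {A : Ω → α} {B : Ω → β} {C : Ω → γ}
    (h : (condLaw p B fun ω => (A ω, C ω)).FactorsThrough C) :
    condLaw p B (fun ω => (A ω, C ω)) = condLaw p B C := by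
  ext ω b
  have slice (a : α) : pr p {ω' | A ω' = a ∧ B ω' = b ∧ C ω' = C ω} =
      condLaw p B (fun ω => (A ω, C ω)) ω b * pr p {ω' | A ω' = a ∧ C ω' = C ω} := by
    by_cases ha : ∃ ω', A ω' = a ∧ C ω' = C ω
    · obtain ⟨ω', rfl, hC⟩ := ha
      have law_mul_pr := condLaw_mul_pr hp B (fun ω => (A ω, C ω)) ω' b
      simp only [Prod.mk.injEq, and_left_comm (a := B _ = b)] at law_mul_pr
      rw [← h hC, ← hC, law_mul_pr]
    · have pr_ac : pr p {ω' | A ω' = a ∧ C ω' = C ω} = 0 :=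
        pr_eq_zero_of_forall_notMem fun ω' hω => ha ⟨ω', hω⟩
      have pr_abc : pr p {ω' | A ω' = a ∧ B ω' = b ∧ C ω' = C ω} = 0 :=
        pr_eq_zero_of_forall_notMem fun ω' hω => ha ⟨ω', hω.1, hω.2.2⟩
      rw [pr_ac, pr_abc, mul_zero]
  have := Fintype.ofFinite α
  rw [← mul_left_inj' (pr_fiber_pos hp C ω).ne', condLaw_mul_pr hp, ← sum_pr_eq_and A, mul_sum,
    ← sum_pr_eq_and A]
  exact sum_congr rfl fun a _ => (slice a).symm

theorem condIndep_iff_condLaw_factorsThrough [Finite α] (hp : ∀ ω, 0 < p ω)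
    {A : Ω → α} {B : Ω → β} {C : Ω → γ} :
    CondIndep p A B C ↔ (condLaw p B fun ω => (A ω, C ω)).FactorsThrough C := by
  rw [← condLaw_eq_iff_condIndep hp]
  exact ⟨fun h => h ▸ condLaw_factorsThrough B C, condLaw_eq_of_factorsThrough hp⟩

end ConditionalIndependence

section Trajectories

variable {m n : ℕ} {𝒳 : Type}

theorem varTuple_eq_iff {S : Finset (Fin m × Fin n)} {ω ω' : Traj m n 𝒳} :
    varTuple S ω = varTuple S ω' ↔ ∀ k t, (k, t) ∈ S → ω k t = ω' k t := by
  simp only [funext_iff, varTuple]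
  refine forall_congr' fun k => forall_congr' fun t => ?_
  split_ifs with h <;> simp [h]

theorem varTuple_union_eq_iff {S T : Finset (Fin m × Fin n)} {ω ω' : Traj m n 𝒳} :
    varTuple (S ∪ T) ω = varTuple (S ∪ T) ω' ↔
      varTuple S ω = varTuple S ω' ∧ varTuple T ω = varTuple T ω' := by
  simp only [varTuple_eq_iff, mem_union, or_imp, forall_and]

/-- The index set of the variables `X_{k,t}` with `k ∈ S` and `t < j`. -/
def pastVars (S : Finset (Fin m)) (j : Fin n) : Finset (Fin m × Fin n) :=
  univ.filter fun q => q.1 ∈ S ∧ q.2 < j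

theorem past_eq_varTuple_pastVars (S : Finset (Fin m)) (j : Fin n) :
    (past S j : Traj m n 𝒳 → _) = varTuple (pastVars S j) := by
  ext ω k t : 3
  simp [past, varTuple, pastVars]

theorem past_union_eq_iff {S T : Finset (Fin m)} {j : Fin n} {ω ω' : Traj m n 𝒳} :
    past (S ∪ T) j ω = past (S ∪ T) j ω' ↔ past S j ω = past S j ω' ∧ past T j ω = past T j ω' := by
  have pastVars_union : pastVars (S ∪ T) j = pastVars S j ∪ pastVars T j := by
    ext q
    simp only [pastVars, mem_union, mem_filter_univ, or_and_right]
  simp only [past_eq_varTuple_pastVars, pastVars_union, varTuple_union_eq_iff]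

theorem factorsThrough_varTuple_inter {β : Type*} {f : Traj m n 𝒳 → β}
    {S T : Finset (Fin m × Fin n)} (hS : f.FactorsThrough (varTuple S))
    (hT : f.FactorsThrough (varTuple T)) : f.FactorsThrough (varTuple (S ∩ T)) := by
  intro ω ω' h
  let splice : Traj m n 𝒳 := fun k t => if (k, t) ∈ S then ω k t else ω' k t
  have agree_on_S : varTuple S ω = varTuple S splice :=
    varTuple_eq_iff.2 fun k t hkt => (if_pos hkt).symm
  have agree_on_T : varTuple T splice = varTuple T ω' := by
    refine varTuple_eq_iff.2 fun k t hkT => ite_eq_right_iff.2 fun hkS => ?_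
    exact varTuple_eq_iff.1 h k t (mem_inter.2 ⟨hkS, hkT⟩)
  exact (hS agree_on_S).trans (hT agree_on_T)

variable [Fintype 𝒳] {p : Traj m n 𝒳 → ℝ}

/-- The conditional law of `X_{i,j}` given the past of all processes. -/
noncomputable def predLaw (p : Traj m n 𝒳 → ℝ) (i : Fin m) (j : Fin n) : Traj m n 𝒳 → 𝒳 → ℝ :=
  condLaw p (fun ω => ω i j) (past univ j)

theorem cmi_eq_zero_iff_predLaw_factorsThrough {α γ : Type} [Fintype α] [Fintype γ]
    (hp : ∀ ω, 0 < p ω) {i : Fin m} {j : Fin n} {A : Traj m n 𝒳 → α} {C : Traj m n 𝒳 → γ}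
    (hAC : ∀ ω ω', past univ j ω = past univ j ω' ↔ A ω = A ω' ∧ C ω = C ω') :
    cmi p A (fun ω => ω i j) C = 0 ↔ (predLaw p i j).FactorsThrough C := by
  rw [cmi_eq_zero_iff_condIndep fun ω => (hp ω).le, condIndep_iff_condLaw_factorsThrough hp,
    predLaw, condLaw_congr (C := past univ j) (D := fun ω => (A ω, C ω)) fun ω ω' => by
      rw [hAC, Prod.mk.injEq]]

variable [DecidableEq 𝒳]

theorem goodSet_iff_predLaw_factorsThrough (hp : ∀ ω, 0 < p ω) {i : Fin m} {j : Fin n}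
    {S : Finset (Fin m × Fin n)} :
    GoodSet p i j S ↔ (∀ q ∈ S, q.2 < j) ∧ (predLaw p i j).FactorsThrough (varTuple S) := by
  refine and_congr_right fun hS => cmi_eq_zero_iff_predLaw_factorsThrough hp fun ω ω' => ?_
  have hS' : S ⊆ univ.filter fun q => q.2 < j := fun q hq => mem_filter_univ q |>.2 (hS q hq)
  rw [← varTuple_union_eq_iff, sdiff_union_of_subset hS', past_eq_varTuple_pastVars]
  simp only [pastVars, mem_univ, true_and]

theorem predLaw_factorsThrough_past_of_isCausalBlanket (hp : ∀ ω, 0 < p ω) {i : Fin m}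
    {A : Finset (Fin m)} (hA : IsCausalBlanket p i A) (j : Fin n) :
    (predLaw p i j).FactorsThrough (past (insert i A) j) := by
  have cmi_eq_zero := (sum_eq_zero_iff_of_nonneg fun j _ =>
    cmi_nonneg (fun ω => (hp ω).le) _ _ _).1 hA.2 j (mem_univ j)
  have cover : (univ.erase i \ A) ∪ ({i} ∪ A) = univ := by
    ext k
    simp only [mem_union, mem_sdiff, mem_erase, mem_univ, mem_singleton]
    tauto
  have predLaw_factorsThrough := (cmi_eq_zero_iff_predLaw_factorsThrough hp fun ω ω' => by
    rw [Prod.mk.injEq, ← past_union_eq_iff, ← past_union_eq_iff, cover]).1 cmi_eq_zero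
  intro ω ω' h
  rw [insert_eq, past_union_eq_iff] at h
  exact predLaw_factorsThrough (Prod.ext h.1 h.2)

theorem goodSet_pastVars_insert_of_isCausalBlanket (hp : ∀ ω, 0 < p ω) {i : Fin m}
    {A : Finset (Fin m)} (hA : IsCausalBlanket p i A) (j : Fin n) :
    GoodSet p i j (pastVars (insert i A) j) := by
  rw [goodSet_iff_predLaw_factorsThrough hp, ← past_eq_varTuple_pastVars]
  exact ⟨fun q hq => ((mem_filter_univ q).1 hq).2,
    predLaw_factorsThrough_past_of_isCausalBlanket hp hA j⟩

theorem infClosed_goodSet (hp : ∀ ω, 0 < p ω) (i : Fin m) (j : Fin n) :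
    InfClosed {S | GoodSet p i j S} := by
  intro S hS T hT
  simp only [Set.mem_ofPred_eq, goodSet_iff_predLaw_factorsThrough hp] at hS hT ⊢
  exact ⟨fun q hq => hS.1 q (mem_inter.1 hq).1, factorsThrough_varTuple_inter hS.2 hT.2⟩

end Trajectories

theorem stmt_14_general {m n : ℕ} {𝒳 : Type} [Fintype 𝒳] [DecidableEq 𝒳]
    (p : Traj m n 𝒳 → ℝ) (hp : ∀ ω, 0 < p ω) (i : Fin m) (j : Fin n)
    (A : Finset (Fin m)) (hA : IsCausalBlanket p i A) :
    (∃! S : Finset (Fin m × Fin n),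
      GoodSet p i j S ∧
        ∀ S' : Finset (Fin m × Fin n), GoodSet p i j S' → S.card ≤ S'.card) ∧
    (∀ S : Finset (Fin m × Fin n),
      (GoodSet p i j S ∧
        ∀ S' : Finset (Fin m × Fin n), GoodSet p i j S' → S.card ≤ S'.card) →
      S ⊆ Finset.univ.filter fun q : Fin m × Fin n => q.1 ∈ insert i A ∧ q.2 < j) := by
  have hgood := goodSet_pastVars_insert_of_isCausalBlanket hp hA j
  obtain ⟨S₀, hS₀⟩ := exists_isLeast_of_infClosed (infClosed_goodSet hp i j) (Set.toFinite _)
    ⟨_, hgood⟩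
  have card_minimal_iff (S) : (GoodSet p i j S ∧ ∀ S', GoodSet p i j S' → #S ≤ #S') ↔ S = S₀ :=
    mem_and_card_minimal_iff_eq_of_isLeast hS₀
  simp only [card_minimal_iff, existsUnique_eq, forall_eq, true_and]
  exact hS₀.2 hgood

/-- Under Assumption 1, fix `i` and a time `j ≥ 2` (i.e. with a nonempty
past). Among the subsets `S` of the variables strictly before time `j` rendering `X_{i,j}`
conditionally independent of the remaining earlier variables given `S`, there is a unique
one of minimum cardinality, and it is contained in
`{ X_{l,τ} : l ∈ A(i) ∪ {i}, τ < j }`, where `A(i)` is the causal Markov boundary of `X_i`. -/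
theorem stmt_14 {m n : ℕ} (hm : 2 ≤ m) (hn : 1 ≤ n)
    {𝒳 : Type} [Fintype 𝒳] [DecidableEq 𝒳] [Nonempty 𝒳]
    (p : Traj m n 𝒳 → ℝ) (hp : Assumption1 p)
    (i : Fin m) (j : Fin n) (hj : 0 < (j : ℕ))
    (A : Finset (Fin m)) (hA : IsCausalBoundary p i A) :
    (∃! S : Finset (Fin m × Fin n),
      GoodSet p i j S ∧
        ∀ S' : Finset (Fin m × Fin n), GoodSet p i j S' → S.card ≤ S'.card) ∧
    (∀ S : Finset (Fin m × Fin n),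
      (GoodSet p i j S ∧
        ∀ S' : Finset (Fin m × Fin n), GoodSet p i j S' → S.card ≤ S'.card) →
      S ⊆ Finset.univ.filter fun q : Fin m × Fin n => q.1 ∈ insert i A ∧ q.2 < j) :=
  stmt_14_general p hp.1 i j A hA.1
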